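/- Let A be a ℂ-vector space and T(T_+(A)) the double tensor algebra with coproduct Δ and half-coproducts Δ_≺, Δ_≻. For every character Φ on T(T_+(A)) there exists a unique triple (κ, β, ρ) of infinitesimal characters such that Φ = exp*(ρ) = E_≺(κ) = E_≻(β). In particular, κ and β are the unique solutions of the fixed-point equations Φ = ε + κ ≺ Φ and Φ = ε + Φ ≻ β, respectively. Conversely, for every infinitesimal character α, each of exp*(α), E_≺(α) and E_≻(α) is a character. -/

import Mathlib

section Words

variable {A : Type*}

/-- A word: a nonempty list of elements of `A` (an element `a_1 ⋯ a_n ∈ A^{⊗n}`, `n ≥ 1`). -/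
def WordNE (A : Type*) := {l : List A // l ≠ []}

/-- A sentence: a bar product `w_1 | ⋯ | w_m` of words, an element of the basis of the
double tensor algebra `T(T_+(A))`. The empty sentence is the unit `1`. -/
abbrev Sentence (A : Type*) := List (WordNE A)

open Classical in
/-- Turn a list of lists into a sentence (the lists arising below are always nonempty). -/
noncomputable def mkWords (ls : List (List A)) : Sentence A :=
  (ls.filter fun l => decide (l ≠ [])).attach.map fun x =>
    ⟨x.1, by have h := List.of_mem_filter x.2; simpa using h⟩

/-- Group a list of natural numbers into maximal runs of consecutive integers. -/
def natRuns : List ℕ → List (List ℕ)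
  | [] => []
  | x :: xs =>
    match natRuns xs with
    | (y :: ys) :: rest => if x + 1 = y then (x :: y :: ys) :: rest else [x] :: (y :: ys) :: rest
    | _ => [[x]]

open Classical in
/-- The two sides `a_S ⊗ a_{J^S}` of the cut of a word `w` along a subset `S` of its
letter positions: `a_S` is the subword at the positions of `S` (the unit, i.e. the empty
sentence, if `S = ∅`), and `a_{J^S}` is the bar product of the subwords corresponding to
the maximal intervals of the complement of `S`. -/
noncomputable def wordCut [Zero A] (w : WordNE A) (S : Finset (Fin w.1.length)) :
    Sentence A × Sentence A :=
  (mkWords [(S.sort (· ≤ ·)).map w.1.get],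
   mkWords (((natRuns ((((Finset.univ : Finset (Fin w.1.length)) \ S).sort (· ≤ ·)).map
      Fin.val))).map fun r => r.map fun i => w.1.getD i 0))

/-- All terms of the coproduct `Δ` of `T(T_+(A))` on a sentence:
`Δ(a_1⋯a_n) = Σ_{S ⊆ [n]} a_S ⊗ a_{J^S}`, extended multiplicatively to bar products. -/
noncomputable def sentenceCuts [Zero A] : Sentence A → List (Sentence A × Sentence A)
  | [] => [([], [])]
  | w :: ws => (Finset.univ : Finset (Finset (Fin w.1.length))).toList.flatMap fun S =>
      (sentenceCuts ws).map fun pr => ((wordCut w S).1 ++ pr.1, (wordCut w S).2 ++ pr.2)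

open Classical in
/-- The terms of the half-coproduct `Δ_≺` (sum over `S` containing the first letter,
`Δ_≺(w_1|⋯|w_m) = Δ_≺(w_1) | Δ(w_2|⋯|w_m)`). -/
noncomputable def sentenceCutsPrec [Zero A] : Sentence A → List (Sentence A × Sentence A)
  | [] => []
  | w :: ws => (((Finset.univ : Finset (Finset (Fin w.1.length))).filter
        fun S => ∃ j ∈ S, j.val = 0)).toList.flatMap fun S =>
      (sentenceCuts ws).map fun pr => ((wordCut w S).1 ++ pr.1, (wordCut w S).2 ++ pr.2)

open Classical in
/-- The terms of the half-coproduct `Δ_≻` (sum over `S` not containing the first letter). -/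
noncomputable def sentenceCutsSucc [Zero A] : Sentence A → List (Sentence A × Sentence A)
  | [] => []
  | w :: ws => (((Finset.univ : Finset (Finset (Fin w.1.length))).filter
        fun S => ∀ j ∈ S, j.val ≠ 0)).toList.flatMap fun S =>
      (sentenceCuts ws).map fun pr => ((wordCut w S).1 ++ pr.1, (wordCut w S).2 ++ pr.2)

/-- The convolution product `f * g = m_ℂ ∘ (f ⊗ g) ∘ Δ` on linear functionals of
`T(T_+(A))` (described on the basis of sentences). -/
noncomputable def convW [Zero A] (f g : Sentence A → ℂ) : Sentence A → ℂ :=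
  fun s => ((sentenceCuts s).map fun pr => f pr.1 * g pr.2).sum

/-- The left half-shuffle product `f ≺ g = m_ℂ ∘ (f ⊗ g) ∘ Δ_≺`. -/
noncomputable def precW [Zero A] (f g : Sentence A → ℂ) : Sentence A → ℂ :=
  fun s => ((sentenceCutsPrec s).map fun pr => f pr.1 * g pr.2).sum

/-- The right half-shuffle product `f ≻ g = m_ℂ ∘ (f ⊗ g) ∘ Δ_≻`. -/
noncomputable def succW [Zero A] (f g : Sentence A → ℂ) : Sentence A → ℂ :=
  fun s => ((sentenceCutsSucc s).map fun pr => f pr.1 * g pr.2).sum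

open Classical in
/-- The counit `ε` of `T(T_+(A))` as a functional. -/
noncomputable def epsW : Sentence A → ℂ := fun s => if s = [] then 1 else 0

/-- A character of `T(T_+(A))`: a unital multiplicative functional. -/
def IsCharW (Φ : Sentence A → ℂ) : Prop :=
  Φ [] = 1 ∧ ∀ s t : Sentence A, Φ (s ++ t) = Φ s * Φ t

/-- An infinitesimal character of `T(T_+(A))`: it vanishes on the unit and on bar
products of two or more words. -/
def IsInfCharW (α : Sentence A → ℂ) : Prop :=
  α [] = 0 ∧ ∀ s t : Sentence A, s ≠ [] → t ≠ [] → α (s ++ t) = 0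

/-- Convolution powers `f^{*k}` (with `f^{*0} = ε`). -/
noncomputable def convPowW [Zero A] (f : Sentence A → ℂ) : ℕ → Sentence A → ℂ
  | 0 => epsW
  | k + 1 => convW f (convPowW f k)

/-- Left half-shuffle powers `α^{≺k}`, with `α^{≺0} = ε` and `α^{≺k} = α ≺ α^{≺(k−1)}`. -/
noncomputable def precPowW [Zero A] (α : Sentence A → ℂ) : ℕ → Sentence A → ℂ
  | 0 => epsW
  | k + 1 => precW α (precPowW α k)

/-- Right half-shuffle powers `α^{≻k}`, with `α^{≻0} = ε` and `α^{≻k} = α^{≻(k−1)} ≻ α`. -/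
noncomputable def succPowW [Zero A] (α : Sentence A → ℂ) : ℕ → Sentence A → ℂ
  | 0 => epsW
  | k + 1 => succW (succPowW α k) α

/-- The convolution exponential `exp^*(α) = Σ_{k≥0} α^{*k}/k!`. -/
noncomputable def expStarW [Zero A] (α : Sentence A → ℂ) : Sentence A → ℂ :=
  fun s => ∑ᶠ k : ℕ, ((k.factorial : ℂ))⁻¹ * convPowW α k s

/-- The left half-shuffle exponential `E_≺(α) = Σ_{k≥0} α^{≺k}`. -/
noncomputable def ePrecW [Zero A] (α : Sentence A → ℂ) : Sentence A → ℂ :=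
  fun s => ∑ᶠ k : ℕ, precPowW α k s

/-- The right half-shuffle exponential `E_≻(α) = Σ_{k≥0} α^{≻k}`. -/
noncomputable def eSuccW [Zero A] (α : Sentence A → ℂ) : Sentence A → ℂ :=
  fun s => ∑ᶠ k : ℕ, succPowW α k s

/-- The character `Φ : T(T_+(A)) → ℂ` extending `φ`:
`Φ(w_1|⋯|w_m) = φ(w_1)⋯φ(w_m)` with `φ` applied to the internal product of each word. -/
noncomputable def charW [Monoid A] (φ : A → ℂ) : Sentence A → ℂ :=
  fun s => (s.map fun w => φ w.1.prod).prod

end Words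

section CutCalculus

variable {A : Type*}

/-- The total number of letters of a sentence. -/
def Sentence.deg (s : Sentence A) : ℕ := (s.map fun w => w.1.length).sum

@[simp] theorem Sentence.deg_nil : Sentence.deg ([] : Sentence A) = 0 := rfl

@[simp] theorem Sentence.deg_cons (w : WordNE A) (s : Sentence A) :
    Sentence.deg (w :: s) = w.1.length + Sentence.deg s := by
  simp [Sentence.deg]

@[simp] theorem Sentence.deg_append (s t : Sentence A) :
    Sentence.deg (s ++ t) = Sentence.deg s + Sentence.deg t := by
  simp [Sentence.deg]

theorem WordNE.length_pos (w : WordNE A) : 0 < w.1.length :=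
  List.length_pos_iff.mpr w.2

theorem Sentence.deg_pos {s : Sentence A} (h : s ≠ []) : 0 < Sentence.deg s := by
  cases s with
  | nil => exact absurd rfl h
  | cons w s => have := w.length_pos; simp; omega

/-- The underlying list of a word. -/
def WordNE.letters (w : WordNE A) : List A := w.1

theorem WordNE.letters_injective : Function.Injective (WordNE.letters (A := A)) :=
  Subtype.val_injective

theorem mkWords_map_letters (ls : List (List A)) :
    (mkWords ls).map WordNE.letters = ls.filter fun l => !l.isEmpty := by
  classical
  unfold mkWords
  refine List.map_map.trans ((List.attach_map_subtype_val _).trans ?_)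
  refine List.filter_congr fun l _ => ?_
  cases l <;> simp

theorem deg_mkWords (ls : List (List A)) :
    Sentence.deg (mkWords ls) = (ls.map List.length).sum := by
  have h : Sentence.deg (mkWords ls) =
      (((mkWords ls).map WordNE.letters).map List.length).sum := by
    rw [List.map_map]; rfl
  rw [h, mkWords_map_letters]
  clear h
  induction ls with
  | nil => rfl
  | cons l ls ih => cases l <;> simp [ih]

theorem mkWords_singleton (w : WordNE A) : mkWords [w.1] = [w] := by
  apply List.map_injective_iff.mpr WordNE.letters_injective
  rw [mkWords_map_letters]
  simp [w.2, WordNE.letters]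

theorem sum_length_natRuns (l : List ℕ) : ((natRuns l).map List.length).sum = l.length := by
  induction l with
  | nil => rfl
  | cons x xs ih =>
    rw [natRuns]
    split
    · rename_i y ys rest h
      rw [h] at ih
      split_ifs <;> simp at ih ⊢ <;> omega
    · rename_i h
      rcases h' : natRuns xs with _ | ⟨_ | ⟨y, ys⟩, rest⟩
      · rw [h'] at ih; simpa [eq_comm] using ih
      · exfalso
        revert h'
        clear ih h
        cases xs with
        | nil => simp [natRuns]
        | cons z zs =>
          rw [natRuns]
          split
          · split_ifs <;> simp
          · simp
      · exact absurd h' (h y ys rest)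

theorem natRuns_range' (a n : ℕ) :
    natRuns (List.range' a (n + 1)) = [List.range' a (n + 1)] := by
  induction n generalizing a with
  | zero => simp [natRuns]
  | succ n ih =>
    rw [List.range'_succ, natRuns, ih, List.range'_succ]
    simp

theorem wordCut_empty [Zero A] (w : WordNE A) : wordCut w ∅ = ([], [w]) := by
  have h1 : mkWords [([] : List A)] = [] := by
    apply List.map_injective_iff.mpr WordNE.letters_injective
    rw [mkWords_map_letters]
    simp
  obtain ⟨n, hn⟩ := Nat.exists_eq_succ_of_ne_zero w.length_pos.ne'
  have h2 : natRuns (List.range w.1.length) = [List.range w.1.length] := by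
    rw [hn, List.range_eq_range', natRuns_range']
  have h3 : (List.range w.1.length).map (fun i => w.1.getD i 0) = w.1 := by
    apply List.ext_getElem
    · simp
    · intro i h h'
      simp [h']
  unfold wordCut
  simp only [Finset.sort_empty, List.map_nil, h1, Finset.sdiff_empty, Fin.sort_univ,
    List.map_coe_finRange_eq_range, h2, List.map_cons, h3, mkWords_singleton]

theorem wordCut_univ [Zero A] (w : WordNE A) : wordCut w Finset.univ = ([w], []) := by
  unfold wordCut
  have h3 : (List.finRange w.1.length).map w.1.get = w.1 := by simp
  simp only [Finset.sdiff_self, Finset.sort_empty, List.map_nil, natRuns, Fin.sort_univ, h3,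
    mkWords_singleton]
  rfl

theorem deg_wordCut_fst [Zero A] (w : WordNE A) (S : Finset (Fin w.1.length)) :
    Sentence.deg (wordCut w S).1 = S.card := by
  simp [wordCut, deg_mkWords]

theorem deg_wordCut_snd [Zero A] (w : WordNE A) (S : Finset (Fin w.1.length)) :
    Sentence.deg (wordCut w S).2 = w.1.length - S.card := by
  classical
  simp only [wordCut, deg_mkWords, List.map_map]
  have : ∀ l : List (List ℕ), (l.map (List.length ∘ fun r => r.map fun i => w.1.getD i 0)) =
      l.map List.length := fun l => by simp [Function.comp_def]
  rw [this, sum_length_natRuns]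
  rw [List.length_map, Finset.length_sort]
  rw [Finset.card_sdiff_of_subset (Finset.subset_univ _)]
  simp

theorem wordCut_fst_ne_nil [Zero A] {w : WordNE A} {S : Finset (Fin w.1.length)} (h : S ≠ ∅) :
    (wordCut w S).1 ≠ [] := by
  intro h'
  have := deg_wordCut_fst w S
  rw [h', Sentence.deg_nil] at this
  exact h (Finset.card_eq_zero.mp this.symm)

theorem wordCut_snd_ne_nil [Zero A] {w : WordNE A} {S : Finset (Fin w.1.length)}
    (h : S ≠ Finset.univ) : (wordCut w S).2 ≠ [] := by
  intro h'
  have := deg_wordCut_snd w S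
  rw [h', Sentence.deg_nil] at this
  have hlt := Finset.card_lt_card (Finset.ssubset_univ_iff.mpr h)
  rw [Finset.card_univ, Fintype.card_fin] at hlt
  omega

/-- The sum over all cuts of `w | ws` whose component in `w` belongs to `F`. -/
theorem sum_flatMap_cuts [Zero A] (w : WordNE A) (F : Finset (Finset (Fin w.1.length)))
    (L : List (Sentence A × Sentence A)) (h : Sentence A × Sentence A → ℂ) :
    ((F.toList.flatMap fun S =>
      L.map fun pr => ((wordCut w S).1 ++ pr.1, (wordCut w S).2 ++ pr.2)).map h).sum =
    ∑ S ∈ F, (L.map fun pr => h ((wordCut w S).1 ++ pr.1, (wordCut w S).2 ++ pr.2)).sum := by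
  rw [← Finset.sum_map_toList]
  induction F.toList with
  | nil => simp
  | cons S l ih => simp [ih, Function.comp_def]

theorem sum_cuts_append [Zero A] (s t : Sentence A) (h : Sentence A × Sentence A → ℂ) :
    ((sentenceCuts (s ++ t)).map h).sum = ((sentenceCuts s).map fun p =>
      ((sentenceCuts t).map fun q => h (p.1 ++ q.1, p.2 ++ q.2)).sum).sum := by
  induction s generalizing h with
  | nil => simp [sentenceCuts]
  | cons w ws ih =>
    rw [List.cons_append, sentenceCuts, sentenceCuts, sum_flatMap_cuts, sum_flatMap_cuts]
    refine Finset.sum_congr rfl fun S _ => ?_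
    rw [ih]
    simp

theorem sum_cutsPrec_append [Zero A] {s : Sentence A} (hs : s ≠ []) (t : Sentence A)
    (h : Sentence A × Sentence A → ℂ) :
    ((sentenceCutsPrec (s ++ t)).map h).sum = ((sentenceCutsPrec s).map fun p =>
      ((sentenceCuts t).map fun q => h (p.1 ++ q.1, p.2 ++ q.2)).sum).sum := by
  cases s with
  | nil => exact absurd rfl hs
  | cons w ws =>
    rw [List.cons_append, sentenceCutsPrec, sentenceCutsPrec, sum_flatMap_cuts, sum_flatMap_cuts]
    refine Finset.sum_congr rfl fun S _ => ?_
    rw [sum_cuts_append]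
    simp

theorem sum_cutsSucc_append [Zero A] {s : Sentence A} (hs : s ≠ []) (t : Sentence A)
    (h : Sentence A × Sentence A → ℂ) :
    ((sentenceCutsSucc (s ++ t)).map h).sum = ((sentenceCutsSucc s).map fun p =>
      ((sentenceCuts t).map fun q => h (p.1 ++ q.1, p.2 ++ q.2)).sum).sum := by
  cases s with
  | nil => exact absurd rfl hs
  | cons w ws =>
    rw [List.cons_append, sentenceCutsSucc, sentenceCutsSucc, sum_flatMap_cuts, sum_flatMap_cuts]
    refine Finset.sum_congr rfl fun S _ => ?_
    rw [sum_cuts_append]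
    simp

theorem sum_cuts_of_fst_ne_nil [Zero A] (s : Sentence A) (h : Sentence A × Sentence A → ℂ)
    (hh : ∀ p, p.1 ≠ [] → h p = 0) : ((sentenceCuts s).map h).sum = h ([], s) := by
  induction s generalizing h with
  | nil => simp [sentenceCuts]
  | cons w ws ih =>
    rw [sentenceCuts, sum_flatMap_cuts, Finset.sum_eq_single ∅]
    · rw [wordCut_empty, ih]
      · rfl
      · intro p hp
        exact hh _ (by simpa using hp)
    · intro S _ hS
      exact List.sum_eq_zero fun x hx => by
        obtain ⟨p, -, rfl⟩ := List.mem_map.mp hx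
        exact hh _ (by simp [wordCut_fst_ne_nil hS])
    · simp

theorem sum_cuts_of_snd_ne_nil [Zero A] (s : Sentence A) (h : Sentence A × Sentence A → ℂ)
    (hh : ∀ p, p.2 ≠ [] → h p = 0) : ((sentenceCuts s).map h).sum = h (s, []) := by
  induction s generalizing h with
  | nil => simp [sentenceCuts]
  | cons w ws ih =>
    rw [sentenceCuts, sum_flatMap_cuts, Finset.sum_eq_single Finset.univ]
    · rw [wordCut_univ, ih]
      · rfl
      · intro p hp
        exact hh _ (by simpa using hp)
    · intro S _ hS
      exact List.sum_eq_zero fun x hx => by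
        obtain ⟨p, -, rfl⟩ := List.mem_map.mp hx
        exact hh _ (by simp [wordCut_snd_ne_nil hS])
    · simp

theorem sum_cutsPrec_singleton [Zero A] (w : WordNE A) (h : Sentence A × Sentence A → ℂ)
    (hh : ∀ p, p.2 ≠ [] → h p = 0) : ((sentenceCutsPrec [w]).map h).sum = h ([w], []) := by
  rw [sentenceCutsPrec, sum_flatMap_cuts, Finset.sum_eq_single Finset.univ]
  · simp [wordCut_univ, sentenceCuts]
  · intro S _ hS
    simp [sentenceCuts, hh, wordCut_snd_ne_nil hS]
  · intro hS
    exact absurd (by simpa using ⟨⟨0, w.length_pos⟩, rfl⟩) hS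

theorem sum_cutsSucc_singleton [Zero A] (w : WordNE A) (h : Sentence A × Sentence A → ℂ)
    (hh : ∀ p, p.1 ≠ [] → h p = 0) : ((sentenceCutsSucc [w]).map h).sum = h ([], [w]) := by
  rw [sentenceCutsSucc, sum_flatMap_cuts, Finset.sum_eq_single ∅]
  · simp [wordCut_empty, sentenceCuts]
  · intro S _ hS
    simp [sentenceCuts, hh, wordCut_fst_ne_nil hS]
  · simp

theorem deg_add_deg_of_mem_cuts [Zero A] (s : Sentence A) :
    ∀ p ∈ sentenceCuts s, Sentence.deg p.1 + Sentence.deg p.2 = Sentence.deg s := by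
  induction s with
  | nil => simp [sentenceCuts]
  | cons w ws ih =>
    intro p hp
    simp only [sentenceCuts, List.mem_flatMap, List.mem_map] at hp
    obtain ⟨S, -, q, hq, rfl⟩ := hp
    have := ih q hq
    have hS := S.card_le_univ
    rw [Fintype.card_fin] at hS
    simp only [Sentence.deg_append, Sentence.deg_cons, deg_wordCut_fst, deg_wordCut_snd]
    omega

theorem cutsPrec_subset [Zero A] (s : Sentence A) : sentenceCutsPrec s ⊆ sentenceCuts s := by
  cases s with
  | nil => simp [sentenceCutsPrec]
  | cons w ws =>
    intro p hp
    simp only [sentenceCutsPrec, List.mem_flatMap] at hp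
    simp only [sentenceCuts, List.mem_flatMap]
    obtain ⟨S, -, h⟩ := hp
    exact ⟨S, by simp, h⟩

theorem cutsSucc_subset [Zero A] (s : Sentence A) : sentenceCutsSucc s ⊆ sentenceCuts s := by
  cases s with
  | nil => simp [sentenceCutsSucc]
  | cons w ws =>
    intro p hp
    simp only [sentenceCutsSucc, List.mem_flatMap] at hp
    simp only [sentenceCuts, List.mem_flatMap]
    obtain ⟨S, -, h⟩ := hp
    exact ⟨S, by simp, h⟩

theorem fst_ne_nil_of_mem_cutsPrec [Zero A] {s : Sentence A} {p : Sentence A × Sentence A}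
    (hp : p ∈ sentenceCutsPrec s) : p.1 ≠ [] := by
  cases s with
  | nil => simp [sentenceCutsPrec] at hp
  | cons w ws =>
    simp only [sentenceCutsPrec, List.mem_flatMap, List.mem_map, Finset.mem_toList,
      Finset.mem_filter] at hp
    obtain ⟨S, ⟨-, j, hj, -⟩, q, -, rfl⟩ := hp
    simp [wordCut_fst_ne_nil (Finset.ne_empty_of_mem hj)]

theorem snd_ne_nil_of_mem_cutsSucc [Zero A] {s : Sentence A} {p : Sentence A × Sentence A}
    (hp : p ∈ sentenceCutsSucc s) : p.2 ≠ [] := by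
  cases s with
  | nil => simp [sentenceCutsSucc] at hp
  | cons w ws =>
    simp only [sentenceCutsSucc, List.mem_flatMap, List.mem_map, Finset.mem_toList,
      Finset.mem_filter] at hp
    obtain ⟨S, ⟨-, hS⟩, q, -, rfl⟩ := hp
    have : S ≠ Finset.univ := by
      rintro rfl
      exact hS ⟨0, w.length_pos⟩ (Finset.mem_univ _) rfl
    simp [wordCut_snd_ne_nil this]

@[simp] theorem epsW_nil : epsW ([] : Sentence A) = 1 := by simp [epsW]

theorem epsW_of_ne_nil {s : Sentence A} (h : s ≠ []) : epsW s = 0 := by simp [epsW, h]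

theorem epsW_append (s t : Sentence A) : epsW (s ++ t) = epsW s * epsW t := by
  by_cases hs : s = [] <;> simp [epsW, hs]

theorem IsInfCharW.apply_append {α : Sentence A → ℂ} (hα : IsInfCharW α) (s t : Sentence A) :
    α (s ++ t) = α s * epsW t + epsW s * α t := by
  by_cases hs : s = []
  · simp [hs, hα.1]
  · by_cases ht : t = []
    · simp [ht, hα.1]
    · simp [epsW, hs, ht, hα.2 s t hs ht]

/-- The operator `g ↦ Σ α(p) g(q)`, the sum being over the cuts `p ⊗ q` listed by `C`. -/
def cutOp (C : Sentence A → List (Sentence A × Sentence A)) (α g : Sentence A → ℂ) :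
    Sentence A → ℂ :=
  fun s => ((C s).map fun p => α p.1 * g p.2).sum

/-- The iterates of `cutOp C α` applied to the counit. -/
noncomputable def cutPow (C : Sentence A → List (Sentence A × Sentence A)) (α : Sentence A → ℂ) :
    ℕ → Sentence A → ℂ
  | 0 => epsW
  | k + 1 => cutOp C α (cutPow C α k)

/-- Every cut listed by `C` preserves the total number of letters, and `[w] ⊗ 1` is, with
multiplicity one, the only cut of a single word with trivial right-hand side. -/
structure IsCutList (C : Sentence A → List (Sentence A × Sentence A)) : Prop where
  deg_add_deg : ∀ s, ∀ p ∈ C s, Sentence.deg p.1 + Sentence.deg p.2 = Sentence.deg s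
  sum_singleton : ∀ (w : WordNE A) (h : Sentence A × Sentence A → ℂ),
    (∀ p, p.2 ≠ [] → h p = 0) → ((C [w]).map h).sum = h ([w], [])

/-- Cuts acting only on the leading factor of a bar product. -/
structure IsHalfCutList (C : Sentence A → List (Sentence A × Sentence A)) : Prop
    extends IsCutList C where
  cutOp_append : ∀ α, IsInfCharW α → ∀ (g : Sentence A → ℂ) (s t : Sentence A), s ≠ [] →
    cutOp C α g (s ++ t) = cutOp C α (fun x => g (x ++ t)) s

variable {C : Sentence A → List (Sentence A × Sentence A)} {α α' : Sentence A → ℂ}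

theorem cutOp_congr (hC : IsCutList C) (hα : α [] = 0) (hα' : α' [] = 0) {g g' : Sentence A → ℂ}
    {s : Sentence A} (h : ∀ t, Sentence.deg t ≤ Sentence.deg s → α t = α' t)
    (hg : ∀ t, Sentence.deg t < Sentence.deg s → g t = g' t) :
    cutOp C α g s = cutOp C α' g' s := by
  unfold cutOp
  congr 1
  refine List.map_congr_left fun p hp => ?_
  have hd := hC.deg_add_deg s p hp
  by_cases h1 : p.1 = []
  · simp [h1, hα, hα']
  · have := Sentence.deg_pos h1
    rw [h p.1 (by omega), hg p.2 (by omega)]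

theorem cutOp_singleton_sub (hC : IsCutList C) (hα : α [] = 0) (hα' : α' [] = 0)
    {g g' : Sentence A → ℂ} {w : WordNE A}
    (h : ∀ t, Sentence.deg t < Sentence.deg [w] → α t = α' t)
    (hg : ∀ t, Sentence.deg t < Sentence.deg [w] → g t = g' t) :
    cutOp C α g [w] - cutOp C α' g' [w] = (α [w] - α' [w]) * g [] := by
  have h0 : g [] = g' [] := hg [] (by simpa using w.length_pos)
  have key := hC.sum_singleton w
    (fun p => if p.2 = [] then α p.1 * g p.2 - α' p.1 * g' p.2 else 0) (by simp +contextual)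
  have : cutOp C α g [w] - cutOp C α' g' [w] =
      ((C [w]).map fun p => α p.1 * g p.2 - α' p.1 * g' p.2).sum := by
    unfold cutOp
    induction C [w] with
    | nil => simp
    | cons a l ih => simp only [List.map_cons, List.sum_cons, ← ih]; ring
  rw [this]
  have h2 : ((C [w]).map fun p => α p.1 * g p.2 - α' p.1 * g' p.2) = (C [w]).map
      (fun p => if p.2 = [] then α p.1 * g p.2 - α' p.1 * g' p.2 else 0) := by
    refine List.map_congr_left fun p hp => ?_
    have hd := hC.deg_add_deg _ p hp
    split_ifs with h2
    · rfl
    · have := Sentence.deg_pos h2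
      by_cases h1 : p.1 = []
      · simp [h1, hα, hα']
      · have := Sentence.deg_pos h1
        rw [h p.1 (by omega), hg p.2 (by omega), sub_self]
  rw [h2, key]
  simp [← h0, sub_mul]

theorem cutPow_eq_zero (hC : IsCutList C) (hα : α [] = 0) {k : ℕ} {s : Sentence A}
    (h : Sentence.deg s < k) : cutPow C α k s = 0 := by
  induction k generalizing s with
  | zero => omega
  | succ k ih =>
    refine List.sum_eq_zero fun x hx => ?_
    obtain ⟨p, hp, rfl⟩ := List.mem_map.mp hx
    have hd := hC.deg_add_deg s p hp
    by_cases h1 : p.1 = []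
    · simp [h1, hα]
    · have := Sentence.deg_pos h1
      simp [ih (s := p.2) (by omega)]

theorem cutPow_congr (hC : IsCutList C) (hα : α [] = 0) (hα' : α' [] = 0) {n : ℕ}
    (h : ∀ t, Sentence.deg t < n → α t = α' t) (k : ℕ) {s : Sentence A}
    (hs : Sentence.deg s < n) : cutPow C α k s = cutPow C α' k s := by
  induction k generalizing s with
  | zero => rfl
  | succ k ih =>
    exact cutOp_congr hC hα hα' (fun t ht => h t (by omega)) fun t ht => ih (by omega)

theorem finsum_mul_cutPow_eq_sum (hC : IsCutList C) (hα : α [] = 0) (c : ℕ → ℂ) {N : ℕ}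
    {s : Sentence A} (h : Sentence.deg s < N) :
    ∑ᶠ k, c k * cutPow C α k s = ∑ k ∈ Finset.range N, c k * cutPow C α k s := by
  refine finsum_eq_sum_of_support_subset _ fun k hk => ?_
  by_contra hk'
  simp only [Finset.coe_range, Set.mem_Iio, not_lt] at hk'
  exact hk (by simp [cutPow_eq_zero hC hα (h.trans_le hk')])

theorem finsum_cutPow_eq_sum (hC : IsCutList C) (hα : α [] = 0) {N : ℕ}
    {s : Sentence A} (h : Sentence.deg s < N) :
    ∑ᶠ k, cutPow C α k s = ∑ k ∈ Finset.range N, cutPow C α k s := by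
  simpa using finsum_mul_cutPow_eq_sum hC hα (fun _ => 1) h

theorem List.sum_map_finsetSum {ι κ : Type*} (l : List ι) (F : Finset κ) (f : κ → ι → ℂ) :
    (l.map fun p => ∑ k ∈ F, f k p).sum = ∑ k ∈ F, (l.map (f k)).sum := by
  induction l with
  | nil => simp
  | cons p l ih => simp only [List.map_cons, List.sum_cons, ih, Finset.sum_add_distrib]

theorem cutOp_sum {κ : Type*} (F : Finset κ) (g : κ → Sentence A → ℂ) (s : Sentence A) :
    cutOp C α (fun t => ∑ k ∈ F, g k t) s = ∑ k ∈ F, cutOp C α (g k) s := by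
  simp only [cutOp, Finset.mul_sum, List.sum_map_finsetSum]

theorem cutOp_const_mul (c : ℂ) (g : Sentence A → ℂ) (s : Sentence A) :
    cutOp C α (fun t => c * g t) s = c * cutOp C α g s := by
  simp only [cutOp, mul_left_comm _ c, List.sum_map_mul_left]

theorem cutOp_mul_const (c : ℂ) (g : Sentence A → ℂ) (s : Sentence A) :
    cutOp C α (fun t => g t * c) s = cutOp C α g s * c := by
  simp only [mul_comm _ c, cutOp_const_mul]

theorem finsum_cutPow_fixed (hC : IsCutList C) (hα : α [] = 0) (s : Sentence A) :
    ∑ᶠ k, cutPow C α k s = epsW s + cutOp C α (fun t => ∑ᶠ k, cutPow C α k t) s := by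
  rw [finsum_cutPow_eq_sum hC hα (N := Sentence.deg s + 1) (by omega), Finset.sum_range_succ',
    add_comm]
  have : cutOp C α (fun t => ∑ᶠ k, cutPow C α k t) s =
      cutOp C α (fun t => ∑ k ∈ Finset.range (Sentence.deg s), cutPow C α k t) s :=
    cutOp_congr hC hα hα (fun _ _ => rfl) fun t ht => finsum_cutPow_eq_sum hC hα ht
  rw [this, cutOp_sum]
  rfl

theorem eq_of_fixed (hC : IsCutList C) (hα : α [] = 0) (hα' : α' [] = 0) {Φ Φ' : Sentence A → ℂ}
    (hΦ : ∀ s, Φ s = epsW s + cutOp C α Φ s) (hΦ' : ∀ s, Φ' s = epsW s + cutOp C α' Φ' s)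
    {n : ℕ} (h : ∀ t, Sentence.deg t < n → α t = α' t) {s : Sentence A}
    (hs : Sentence.deg s < n) : Φ s = Φ' s := by
  induction hd : Sentence.deg s using Nat.strong_induction_on generalizing s with
  | _ d ih =>
    rw [hΦ, hΦ', cutOp_congr hC hα hα' (fun t ht => h t (by omega))
      fun t ht => ih _ (by omega) (by omega) rfl]

theorem finsum_cutPow_eq_iff (hC : IsCutList C) (hα : α [] = 0) (Φ : Sentence A → ℂ) :
    (Φ = fun s => ∑ᶠ k, cutPow C α k s) ↔ Φ = fun s => epsW s + cutOp C α Φ s := by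
  constructor
  · rintro rfl
    exact funext (finsum_cutPow_fixed hC hα)
  · intro h
    exact funext fun s => eq_of_fixed hC hα hα (congrFun h) (finsum_cutPow_fixed hC hα)
      (fun _ _ => rfl) (Nat.lt_succ_self _)

theorem isCharW_finsum_cutPow (hC : IsHalfCutList C) (hα : IsInfCharW α) :
    IsCharW fun s => ∑ᶠ k, cutPow C α k s := by
  have hfix := finsum_cutPow_fixed hC.toIsCutList hα.1
  set Φ : Sentence A → ℂ := fun s => ∑ᶠ k, cutPow C α k s with hΦ
  change ∀ s, Φ s = _ at hfix
  have h1 : Φ [] = 1 := by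
    simp only [hΦ]
    rw [finsum_cutPow_eq_sum hC.toIsCutList hα.1 (N := 1) (by simp)]
    simp [cutPow]
  refine ⟨h1, fun s t => ?_⟩
  induction hd : Sentence.deg s using Nat.strong_induction_on generalizing s with
  | _ d ih =>
    by_cases hs : s = []
    · simp [hs, h1]
    · rw [hfix (s ++ t), hfix s, epsW_append, epsW_of_ne_nil hs, zero_mul, zero_add, zero_add,
        hC.cutOp_append α hα _ s t hs,
        cutOp_congr hC.toIsCutList hα.1 hα.1 (g' := fun x => Φ x * Φ t) (fun _ _ => rfl)
          fun x hx => ih _ (by omega) x rfl]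
      unfold cutOp
      rw [← List.sum_map_mul_right]
      simp [mul_assoc]

theorem finsum_cutPow_singleton_sub (hC : IsHalfCutList C) (hα : IsInfCharW α)
    (hα' : IsInfCharW α') (w : WordNE A)
    (h : ∀ t, Sentence.deg t < Sentence.deg [w] → α t = α' t) :
    (∑ᶠ k, cutPow C α k [w]) - α [w] = (∑ᶠ k, cutPow C α' k [w]) - α' [w] := by
  have hfix := finsum_cutPow_fixed hC.toIsCutList hα.1
  have hfix' := finsum_cutPow_fixed hC.toIsCutList hα'.1
  have key := cutOp_singleton_sub hC.toIsCutList hα.1 hα'.1 h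
    fun t ht => eq_of_fixed hC.toIsCutList hα.1 hα'.1 hfix hfix' h ht
  have h1 : ∑ᶠ k, cutPow C α k [] = 1 := (isCharW_finsum_cutPow hC hα).1
  rw [h1] at key
  rw [hfix, hfix']
  linear_combination key

theorem isCutList_cuts [Zero A] : IsCutList (sentenceCuts (A := A)) where
  deg_add_deg := deg_add_deg_of_mem_cuts
  sum_singleton w := sum_cuts_of_snd_ne_nil [w]

theorem isHalfCutList_cutsPrec [Zero A] : IsHalfCutList (sentenceCutsPrec (A := A)) where
  deg_add_deg s p hp := deg_add_deg_of_mem_cuts s p (cutsPrec_subset s hp)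
  sum_singleton := sum_cutsPrec_singleton
  cutOp_append α hα g s t hs := by
    unfold cutOp
    rw [sum_cutsPrec_append hs]
    congr 1
    refine List.map_congr_left fun p hp => ?_
    have h0 := epsW_of_ne_nil (fst_ne_nil_of_mem_cutsPrec hp)
    simp only [hα.apply_append, h0, zero_mul, add_zero]
    rw [sum_cuts_of_fst_ne_nil]
    · simp
    · intro q hq
      simp [epsW_of_ne_nil hq]

theorem isHalfCutList_cutsSucc [Zero A] :
    IsHalfCutList fun s : Sentence A => (sentenceCutsSucc s).map Prod.swap where
  deg_add_deg s p hp := by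
    obtain ⟨q, hq, rfl⟩ := List.mem_map.mp hp
    have := deg_add_deg_of_mem_cuts s q (cutsSucc_subset s hq)
    simp only [Prod.fst_swap, Prod.snd_swap]
    omega
  sum_singleton w h hh := by
    rw [List.map_map, sum_cutsSucc_singleton]
    · rfl
    · exact fun p hp => hh _ hp
  cutOp_append α hα g s t hs := by
    unfold cutOp
    rw [List.map_map, List.map_map, sum_cutsSucc_append hs]
    congr 1
    refine List.map_congr_left fun p hp => ?_
    have h0 := epsW_of_ne_nil (snd_ne_nil_of_mem_cutsSucc hp)
    simp only [Function.comp_apply, Prod.fst_swap, Prod.snd_swap, hα.apply_append, h0, zero_mul,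
      add_zero]
    rw [sum_cuts_of_snd_ne_nil]
    · simp
    · intro q hq
      simp [epsW_of_ne_nil hq]

theorem succW_eq_cutOp [Zero A] (f g : Sentence A → ℂ) :
    succW f g = cutOp (fun s => (sentenceCutsSucc s).map Prod.swap) g f := by
  funext s
  simp [succW, cutOp, Function.comp_def, mul_comm]

theorem convPowW_eq_cutPow [Zero A] (f : Sentence A → ℂ) (k : ℕ) :
    convPowW f k = cutPow sentenceCuts f k := by
  induction k with
  | zero => rfl
  | succ k ih => rw [convPowW, ih]; rfl

theorem precPowW_eq_cutPow [Zero A] (f : Sentence A → ℂ) (k : ℕ) :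
    precPowW f k = cutPow sentenceCutsPrec f k := by
  induction k with
  | zero => rfl
  | succ k ih => rw [precPowW, ih]; rfl

theorem succPowW_eq_cutPow [Zero A] (f : Sentence A → ℂ) (k : ℕ) :
    succPowW f k = cutPow (fun s => (sentenceCutsSucc s).map Prod.swap) f k := by
  induction k with
  | zero => rfl
  | succ k ih => rw [succPowW, ih, succW_eq_cutOp]; rfl

theorem ePrecW_eq [Zero A] (f : Sentence A → ℂ) :
    ePrecW f = fun s => ∑ᶠ k, cutPow sentenceCutsPrec f k s := by
  funext s; simp only [ePrecW, precPowW_eq_cutPow]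

theorem eSuccW_eq [Zero A] (f : Sentence A → ℂ) :
    eSuccW f = fun s => ∑ᶠ k, cutPow (fun s => (sentenceCutsSucc s).map Prod.swap) f k s := by
  funext s; simp only [eSuccW, succPowW_eq_cutPow]

theorem expStarW_eq [Zero A] (f : Sentence A → ℂ) :
    expStarW f = fun s => ∑ᶠ k : ℕ, (k.factorial : ℂ)⁻¹ * cutPow sentenceCuts f k s := by
  funext s; simp only [expStarW, convPowW_eq_cutPow]

/-- Convolution by an infinitesimal character is dual to a derivation of the bar product. -/
theorem cutOp_cuts_append [Zero A] (hα : IsInfCharW α) (g : Sentence A → ℂ) (s t : Sentence A) :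
    cutOp sentenceCuts α g (s ++ t) = cutOp sentenceCuts α (fun x => g (x ++ t)) s +
      cutOp sentenceCuts α (fun x => g (s ++ x)) t := by
  unfold cutOp
  rw [sum_cuts_append]
  simp only [hα.apply_append, add_mul, List.sum_map_add]
  congr 1
  · congr 1
    refine List.map_congr_left fun p _ => ?_
    rw [sum_cuts_of_fst_ne_nil]
    · simp
    · intro q hq
      simp [epsW_of_ne_nil hq]
  · rw [sum_cuts_of_fst_ne_nil]
    · simp
    · intro q hq
      simp [epsW_of_ne_nil hq]

theorem cutPow_cuts_append [Zero A] (hα : IsInfCharW α) (k : ℕ) (s t : Sentence A) :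
    cutPow sentenceCuts α k (s ++ t) = ∑ m ∈ Finset.HasAntidiagonal.antidiagonal k,
      (k.choose m.1 : ℂ) * (cutPow sentenceCuts α m.1 s * cutPow sentenceCuts α m.2 t) := by
  induction k generalizing s t with
  | zero => simp [cutPow, epsW_append]
  | succ k ih =>
    rw [Finset.sum_antidiagonal_choose_succ_mul
      (fun i j => cutPow sentenceCuts α i s * cutPow sentenceCuts α j t), cutPow,
      cutOp_cuts_append hα]
    simp only [ih, cutOp_sum, cutOp_const_mul, cutOp_mul_const]
    rw [add_comm]
    congr 1
    refine Finset.sum_congr rfl fun m hm => ?_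
    rw [Nat.choose_symm_of_eq_add (Finset.HasAntidiagonal.mem_antidiagonal.mp hm).symm]
    rfl

theorem isCharW_expStarW [Zero A] (hα : IsInfCharW α) : IsCharW (expStarW α) := by
  rw [expStarW_eq]
  have hC := isCutList_cuts (A := A)
  refine ⟨?_, fun s t => ?_⟩
  · beta_reduce
    rw [finsum_mul_cutPow_eq_sum hC hα.1 _ (N := 1) (by simp)]
    simp [cutPow]
  · have hfin : ∀ u : Sentence A, (Function.support fun k : ℕ =>
        (k.factorial : ℂ)⁻¹ * cutPow sentenceCuts α k u).Finite := fun u =>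
      (Set.finite_Iic (Sentence.deg u)).subset fun k hk => by
        by_contra hk'
        exact hk (by simp [cutPow_eq_zero hC hα.1 (not_le.mp hk')])
    have hsum : ∀ u : Sentence A, Summable fun k : ℕ =>
        ‖(k.factorial : ℂ)⁻¹ * cutPow sentenceCuts α k u‖ := fun u =>
      summable_of_hasFiniteSupport ((hfin u).subset fun k hk => by simpa using hk)
    beta_reduce
    rw [← tsum_eq_finsum (L := .unconditional ℕ) (hfin (s ++ t)),
      ← tsum_eq_finsum (L := .unconditional ℕ) (hfin s),
      ← tsum_eq_finsum (L := .unconditional ℕ) (hfin t),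
      tsum_mul_tsum_eq_tsum_sum_antidiagonal_of_summable_norm (hsum s) (hsum t)]
    refine tsum_congr fun k => ?_
    rw [cutPow_cuts_append hα, Finset.mul_sum]
    refine Finset.sum_congr rfl fun m hm => ?_
    obtain ⟨i, j⟩ := m
    obtain rfl := (Finset.HasAntidiagonal.mem_antidiagonal.mp hm).symm
    have h := Nat.choose_mul_factorial_mul_factorial (Nat.le_add_right i j)
    rw [Nat.add_sub_cancel_left] at h
    have h' : (((i + j).choose i : ℂ) * i.factorial * j.factorial) = (i + j).factorial := by
      exact_mod_cast h
    have hi : (i.factorial : ℂ) ≠ 0 := by exact_mod_cast i.factorial_ne_zero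
    have hj : (j.factorial : ℂ) ≠ 0 := by exact_mod_cast j.factorial_ne_zero
    have hij : ((i + j).factorial : ℂ) ≠ 0 := by exact_mod_cast (i + j).factorial_ne_zero
    field_simp
    rw [← h']
    ring

theorem expStarW_singleton_sub [Zero A] (hα : IsInfCharW α) (hα' : IsInfCharW α') (w : WordNE A)
    (h : ∀ t, Sentence.deg t < Sentence.deg [w] → α t = α' t) :
    expStarW α [w] - α [w] = expStarW α' [w] - α' [w] := by
  have hC := isCutList_cuts (A := A)
  rw [expStarW_eq, expStarW_eq]
  beta_reduce
  rw [finsum_mul_cutPow_eq_sum hC hα.1 _ (N := Sentence.deg [w] + 2) (by omega),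
    finsum_mul_cutPow_eq_sum hC hα'.1 _ (N := Sentence.deg [w] + 2) (by omega),
    sub_eq_sub_iff_sub_eq_sub, ← Finset.sum_sub_distrib, Finset.sum_range_succ',
    Finset.sum_range_succ', Finset.sum_eq_zero]
  · have h0 := cutOp_singleton_sub (g := epsW) hC hα.1 hα'.1 h fun _ _ => rfl
    simp only [epsW_nil, mul_one] at h0
    simp [cutPow, h0]
  · intro k _
    have hk := cutOp_singleton_sub hC hα.1 hα'.1 h
      fun t ht => cutPow_congr hC hα.1 hα'.1 h (k + 1) ht
    rw [cutPow_eq_zero hC hα.1 (by simp), mul_zero] at hk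
    rw [← mul_sub]
    exact mul_eq_zero_of_right _ hk

/-- The infinitesimal character with prescribed values on words. -/
def infCharOfWords (f : WordNE A → ℂ) : Sentence A → ℂ
  | [w] => f w
  | _ => 0

theorem isInfCharW_infCharOfWords (f : WordNE A → ℂ) : IsInfCharW (infCharOfWords f) := by
  refine ⟨rfl, fun s t hs ht => ?_⟩
  match s, t, hs, ht with
  | [_], _ :: _, _, _ => rfl
  | _ :: _ :: _, _ :: _, _, _ => rfl

theorem IsInfCharW.ext_words (hα : IsInfCharW α) (hα' : IsInfCharW α') {s : Sentence A}
    (h : ∀ w, s = [w] → α s = α' s) : α s = α' s := by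
  match s, h with
  | [], _ => rw [hα.1, hα'.1]
  | [w], h => exact h w rfl
  | w :: v :: u, _ => rw [← List.singleton_append, hα.2 _ _ (by simp) (by simp),
      hα'.2 _ _ (by simp) (by simp)]

theorem IsCharW.ext_words {Φ Ψ : Sentence A → ℂ} (hΦ : IsCharW Φ) (hΨ : IsCharW Ψ)
    (h : ∀ w, Φ [w] = Ψ [w]) : Φ = Ψ := by
  funext s
  induction s with
  | nil => rw [hΦ.1, hΨ.1]
  | cons w ws ih => rw [← List.singleton_append, hΦ.2, hΨ.2, ih, h]

/-- A map from infinitesimal characters to characters which, on words, is the identity up to a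
correction depending only on lower degrees is a bijection. -/
theorem existsUnique_infChar_of_triangular (F : (Sentence A → ℂ) → Sentence A → ℂ)
    (hchar : ∀ α, IsInfCharW α → IsCharW (F α))
    (hF : ∀ α α', IsInfCharW α → IsInfCharW α' → ∀ w : WordNE A,
      (∀ t, Sentence.deg t < Sentence.deg [w] → α t = α' t) →
      F α [w] - α [w] = F α' [w] - α' [w])
    {Φ : Sentence A → ℂ} (hΦ : IsCharW Φ) : ∃! α, IsInfCharW α ∧ Φ = F α := by
  let a : ℕ → Sentence A → ℂ := fun k =>
    Nat.rec (infCharOfWords 0)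
      (fun _ b => infCharOfWords fun w => Φ [w] - (F b [w] - b [w])) k
  have ha : ∀ k, IsInfCharW (a k) := fun k => by
    cases k <;> exact isInfCharW_infCharOfWords _
  have hstep : ∀ k w, a (k + 1) [w] = Φ [w] - (F (a k) [w] - a k [w]) := fun _ _ => rfl
  have hstable : ∀ k s, Sentence.deg s < k → a (k + 1) s = a k s := by
    intro k
    induction k with
    | zero => intro s hs; omega
    | succ k ih =>
      intro s hs
      refine (ha (k + 1 + 1)).ext_words (ha (k + 1)) fun w hw => ?_
      subst hw
      have hk := hF _ _ (ha (k + 1)) (ha k) w fun t ht => ih t (by omega)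
      linear_combination hstep (k + 1) w - hstep k w - hk
  have hstable' : ∀ k m s, Sentence.deg s < k → a (k + m) s = a k s := by
    intro k m s hs
    induction m with
    | zero => rfl
    | succ m ih => rw [← ih, ← hstable (k + m) s (by omega)]; rfl
  let b : Sentence A → ℂ := infCharOfWords fun w => a (Sentence.deg [w] + 1) [w]
  have hb : IsInfCharW b := isInfCharW_infCharOfWords _
  have hba : ∀ k s, Sentence.deg s < k → b s = a k s := by
    intro k s hs
    refine hb.ext_words (ha k) fun w hw => ?_
    subst hw
    obtain ⟨m, rfl⟩ := Nat.exists_eq_add_of_lt hs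
    rw [show Sentence.deg [w] + m + 1 = Sentence.deg [w] + 1 + m by omega,
      hstable' _ _ _ (by omega)]
    rfl
  have hΦb : Φ = F b := by
    refine hΦ.ext_words (hchar b hb) fun w => ?_
    have hd := hF b (a (Sentence.deg [w])) hb (ha _) w fun t ht => hba _ t ht
    have hw : b [w] = a (Sentence.deg [w] + 1) [w] := rfl
    rw [hstep] at hw
    linear_combination -hd - hw
  refine ⟨b, ⟨hb, hΦb⟩, ?_⟩
  rintro c ⟨hc, hΦc⟩
  funext s
  induction hd : Sentence.deg s using Nat.strong_induction_on generalizing s with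
  | _ d ih =>
    refine hc.ext_words hb fun w hw => ?_
    subst hw
    have hcb := hF c b hc hb w fun t ht => ih _ (by omega) t rfl
    rw [← hΦb, ← hΦc] at hcb
    linear_combination -hcb

end CutCalculus

/-- For every character `Φ` on the double tensor algebra `T(T_+(A))`
there exists a unique triple `(κ, β, ρ)` of infinitesimal characters such that
`Φ = exp^*(ρ) = E_≺(κ) = E_≻(β)`; in particular `κ` and `β` are the unique solutions of
the fixed-point equations `Φ = ε + κ ≺ Φ` and `Φ = ε + Φ ≻ β`. Conversely, for every
infinitesimal character `α`, each of `exp^*(α)`, `E_≺(α)`, `E_≻(α)` is a character. -/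
theorem exists_unique_cumulant_triple_of_character
    (A : Type*) [AddCommGroup A] [Module ℂ A] :
    (∀ Φ : Sentence A → ℂ, IsCharW Φ →
      (∃! p : (Sentence A → ℂ) × (Sentence A → ℂ) × (Sentence A → ℂ),
        IsInfCharW p.1 ∧ IsInfCharW p.2.1 ∧ IsInfCharW p.2.2 ∧
        Φ = ePrecW p.1 ∧ Φ = eSuccW p.2.1 ∧ Φ = expStarW p.2.2) ∧
      (∃! κ : Sentence A → ℂ, IsInfCharW κ ∧
        Φ = fun s => epsW s + precW κ Φ s) ∧
      (∃! β : Sentence A → ℂ, IsInfCharW β ∧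
        Φ = fun s => epsW s + succW Φ β s) ∧
      (∀ κ : Sentence A → ℂ, IsInfCharW κ →
        ((Φ = ePrecW κ) ↔ (Φ = fun s => epsW s + precW κ Φ s))) ∧
      (∀ β : Sentence A → ℂ, IsInfCharW β →
        ((Φ = eSuccW β) ↔ (Φ = fun s => epsW s + succW Φ β s)))) ∧
    (∀ α : Sentence A → ℂ, IsInfCharW α →
      IsCharW (expStarW α) ∧ IsCharW (ePrecW α) ∧ IsCharW (eSuccW α)) := by
  have hprec := isHalfCutList_cutsPrec (A := A)
  have hsucc := isHalfCutList_cutsSucc (A := A)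
  have cPrec : ∀ α : Sentence A → ℂ, IsInfCharW α → IsCharW (ePrecW α) := fun α hα => by
    rw [ePrecW_eq]; exact isCharW_finsum_cutPow hprec hα
  have cSucc : ∀ α : Sentence A → ℂ, IsInfCharW α → IsCharW (eSuccW α) := fun α hα => by
    rw [eSuccW_eq]; exact isCharW_finsum_cutPow hsucc hα
  have cExp : ∀ α : Sentence A → ℂ, IsInfCharW α → IsCharW (expStarW α) :=
    fun _ hα => isCharW_expStarW hα
  have iffPrec : ∀ (Φ κ : Sentence A → ℂ), IsInfCharW κ →
      ((Φ = ePrecW κ) ↔ (Φ = fun s => epsW s + precW κ Φ s)) := fun Φ κ hκ => by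
    rw [ePrecW_eq]; exact finsum_cutPow_eq_iff hprec.toIsCutList hκ.1 Φ
  have iffSucc : ∀ (Φ β : Sentence A → ℂ), IsInfCharW β →
      ((Φ = eSuccW β) ↔ (Φ = fun s => epsW s + succW Φ β s)) := fun Φ β hβ => by
    rw [eSuccW_eq, succW_eq_cutOp]; exact finsum_cutPow_eq_iff hsucc.toIsCutList hβ.1 Φ
  refine ⟨fun Φ hΦ => ?_, fun α hα => ⟨cExp α hα, cPrec α hα, cSucc α hα⟩⟩
  have uPrec : ∃! κ, IsInfCharW κ ∧ Φ = ePrecW κ :=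
    existsUnique_infChar_of_triangular ePrecW cPrec (fun α α' hα hα' w h => by
      rw [ePrecW_eq, ePrecW_eq]; exact finsum_cutPow_singleton_sub hprec hα hα' w h) hΦ
  have uSucc : ∃! β, IsInfCharW β ∧ Φ = eSuccW β :=
    existsUnique_infChar_of_triangular eSuccW cSucc (fun α α' hα hα' w h => by
      rw [eSuccW_eq, eSuccW_eq]; exact finsum_cutPow_singleton_sub hsucc hα hα' w h) hΦ
  have uExp : ∃! ρ, IsInfCharW ρ ∧ Φ = expStarW ρ :=
    existsUnique_infChar_of_triangular expStarW cExp
      (fun _ _ hα hα' w h => expStarW_singleton_sub hα hα' w h) hΦ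
  refine ⟨?_, ?_, ?_, iffPrec Φ, iffSucc Φ⟩
  · obtain ⟨κ, ⟨hκ, eκ⟩, uκ⟩ := uPrec
    obtain ⟨β, ⟨hβ, eβ⟩, uβ⟩ := uSucc
    obtain ⟨ρ, ⟨hρ, eρ⟩, uρ⟩ := uExp
    refine ⟨(κ, β, ρ), ⟨hκ, hβ, hρ, eκ, eβ, eρ⟩, ?_⟩
    rintro ⟨κ', β', ρ'⟩ ⟨hκ', hβ', hρ', eκ', eβ', eρ'⟩
    rw [uκ κ' ⟨hκ', eκ'⟩, uβ β' ⟨hβ', eβ'⟩, uρ ρ' ⟨hρ', eρ'⟩]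
  · exact (existsUnique_congr fun κ => and_congr_right fun hκ => iffPrec Φ κ hκ).mp uPrec
  · exact (existsUnique_congr fun β => and_congr_right fun hβ => iffSucc Φ β hβ).mp uSucc
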